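/- arXiv:2410.24158 — 2 statements merged into one kernel-verified Lean document; each statement's English description precedes it below -/
import Mathlib

section
/- Let p ≥ 2 be a real number, let f : ℝ^n → ℝ be continuously differentiable and strictly convex, let c ∈ ℝ^n and r > 0, and let x be a minimizer of f over the closed ball {y ∈ ℝ^n : ‖y − c‖_p ≤ r}. Then either ∇f(x) = 0 (so x is the global minimizer of f), or ‖x − c‖_p = r and for every coordinate i, (∇f(x))_i = −(‖∇f(x)‖_{p/(p−1)} / r^{p−1}) · |x_i − c_i|^{p−2} (x_i − c_i). -/
/-!
The argument combines first-order optimality with the equality case of Hölder's inequality.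

Since the `ℓ_p` ball is convex, a minimizer `x` satisfies `⟪∇f(x), y - x⟫ ≥ 0` for every `y` in the
ball (`variational_inequality`). If `∇f(x) = 0`, convexity makes `x` a global minimizer
(`isMin_of_gradient_zero`). Otherwise let `q = p / (p - 1)`, `N = ‖∇f(x)‖_q`, `a = (x - c) / r` and
`b = -∇f(x) / N`, so that `∑ |a_i|^p ≤ 1` and `∑ |b_i|^q = 1`. Testing the variational inequality
at the Hölder-dual point `y_i = c_i + r |b_i|^(q-2) b_i` gives `∑ a_i b_i ≥ 1`. This forces equality
in Young's inequality `a_i b_i ≤ |a_i|^p / p + |b_i|^q / q` for every `i`, together with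
`∑ |a_i|^p = 1`. Equality in Young's inequality means that `a_i` minimizes
`t ↦ |t|^p / p + |b_i|^q / q - t b_i`, so that `b_i = |a_i|^(p-2) a_i` (`eq_of_young_eq`), which is
the claimed formula after rescaling.
-/

open Finset

/-- The ℓ_p "norm" for real exponent p: ‖x‖_p = (Σ_i |x_i|^p)^(1/p). -/
noncomputable def lpNorm {n : ℕ} (p : ℝ) (x : EuclideanSpace ℝ (Fin n)) : ℝ :=
  (∑ i, |x i| ^ p) ^ (1 / p)

/-- The equality case of Young's inequality: `a` is a critical point of the difference of the
two sides, as a function of the first variable. -/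
lemma eq_of_young_eq {p q : ℝ} (h : p.HolderConjugate q) {a b : ℝ}
    (hab : |a| ^ p / p + |b| ^ q / q ≤ a * b) : b = |a| ^ (p - 2) * a := by
  have hmin : IsLocalMin (fun t : ℝ => |t| ^ p / p + |b| ^ q / q - t * b) a := by
    refine Filter.Eventually.of_forall fun t => ?_
    have := Real.young_inequality t b h
    change |a| ^ p / p + |b| ^ q / q - a * b ≤ |t| ^ p / p + |b| ^ q / q - t * b
    linarith
  have hd : HasDerivAt (fun t : ℝ => |t| ^ p / p + |b| ^ q / q - t * b)
      (p * |a| ^ (p - 2) * a / p - 1 * b) a :=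
    (((hasDerivAt_abs_rpow a h.lt).div_const p).add_const _).sub ((hasDerivAt_id a).mul_const b)
  have h0 := hmin.hasDerivAt_eq_zero hd
  have hp : p ≠ 0 := h.ne_zero
  field_simp at h0
  linarith

/-- The equality case of Hölder's inequality for normalized vectors. -/
lemma eq_of_holder_eq {n : ℕ} {p q : ℝ} (h : p.HolderConjugate q) {a b : Fin n → ℝ}
    (ha : ∑ i, |a i| ^ p ≤ 1) (hb : ∑ i, |b i| ^ q = 1) (hab : 1 ≤ ∑ i, a i * b i) :
    ∑ i, |a i| ^ p = 1 ∧ ∀ i, b i = |a i| ^ (p - 2) * a i := by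
  have hY : ∀ i ∈ univ, a i * b i ≤ |a i| ^ p / p + |b i| ^ q / q :=
    fun i _ => Real.young_inequality _ _ h
  have hsum : ∑ i, (|a i| ^ p / p + |b i| ^ q / q) = (∑ i, |a i| ^ p) / p + 1 / q := by
    rw [sum_add_distrib, ← sum_div, ← sum_div, hb]
  have hp : 0 < p := h.pos
  have hpq : 1 / p + 1 / q = 1 := by simpa using h.inv_add_inv_eq_one
  have hle : (∑ i, |a i| ^ p) / p ≤ 1 / p := by gcongr
  have hS := sum_le_sum hY
  rw [hsum] at hS
  have hge : 1 / p ≤ (∑ i, |a i| ^ p) / p := by linarith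
  refine ⟨le_antisymm ha ((div_le_div_iff_of_pos_right hp).1 hge), fun i => ?_⟩
  have heq : ∑ i, a i * b i = ∑ i, (|a i| ^ p / p + |b i| ^ q / q) := by
    rw [hsum]; linarith
  exact eq_of_young_eq h ((sum_eq_sum_iff_of_le hY).1 heq i (mem_univ i)).ge

/-- The duality map `t ↦ |t|^(q-2) t` turns an `ℓ_q` sum into an `ℓ_p` sum. -/
lemma abs_dual_rpow {p q : ℝ} (h : p.HolderConjugate q) (t : ℝ) :
    |(|t| ^ (q - 2) * t)| ^ p = |t| ^ q := by
  have hp : p ≠ 0 := h.ne_zero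
  have hq : q ≠ 0 := h.symm.ne_zero
  rcases eq_or_ne t 0 with rfl | ht
  · simp [hp, hq]
  · have ht' : 0 < |t| := abs_pos.2 ht
    rw [abs_mul, abs_of_nonneg (by positivity : 0 ≤ |t| ^ (q - 2)), ← Real.rpow_add_one ht'.ne',
      ← Real.rpow_mul ht'.le]
    congr 1
    have := h.sub_one_mul_conj
    have := h.symm.sub_one_mul_conj
    linarith

lemma dual_mul_self {q : ℝ} (hq : q ≠ 0) (t : ℝ) : |t| ^ (q - 2) * t * t = |t| ^ q := by
  rcases eq_or_ne t 0 with rfl | ht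
  · simp [hq]
  · have ht' : 0 < |t| := abs_pos.2 ht
    rw [mul_assoc, ← abs_mul_abs_self t, ← mul_assoc, ← Real.rpow_add_one ht'.ne',
      ← Real.rpow_add_one ht'.ne']
    congr 1; ring

lemma sum_abs_rpow_nonneg {n : ℕ} (p : ℝ) (z : EuclideanSpace ℝ (Fin n)) :
    0 ≤ ∑ i, |z i| ^ p :=
  sum_nonneg fun _ _ => Real.rpow_nonneg (abs_nonneg _) _

lemma lpNorm_rpow {n : ℕ} {p : ℝ} (hp : 0 < p) (z : EuclideanSpace ℝ (Fin n)) :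
    lpNorm p z ^ p = ∑ i, |z i| ^ p := by
  rw [lpNorm, one_div, Real.rpow_inv_rpow (sum_abs_rpow_nonneg p z) hp.ne']

lemma lpNorm_le_iff {n : ℕ} {p r : ℝ} (hp : 0 < p) (hr : 0 < r) (z : EuclideanSpace ℝ (Fin n)) :
    lpNorm p z ≤ r ↔ ∑ i, |z i / r| ^ p ≤ 1 := by
  have h : ∀ i, |z i / r| ^ p = |z i| ^ p / r ^ p := fun i => by
    rw [abs_div, abs_of_pos hr, Real.div_rpow (abs_nonneg _) hr.le]
  simp_rw [h]
  rw [← sum_div, div_le_one (by positivity), lpNorm, one_div,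
    Real.rpow_inv_le_iff_of_pos (sum_abs_rpow_nonneg p z) hr.le hp]

lemma lpNorm_eq_of_sum {n : ℕ} {p r : ℝ} (hp : 0 < p) (hr : 0 < r) (z : EuclideanSpace ℝ (Fin n))
    (hz : ∑ i, |z i / r| ^ p = 1) : lpNorm p z = r := by
  have h : ∀ i, |z i / r| ^ p = |z i| ^ p / r ^ p := fun i => by
    rw [abs_div, abs_of_pos hr, Real.div_rpow (abs_nonneg _) hr.le]
  simp_rw [h] at hz
  rw [← sum_div, div_eq_one_iff_eq (by positivity)] at hz
  rw [lpNorm, hz, one_div, Real.rpow_rpow_inv hr.le hp.ne']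

lemma lpNorm_pos {n : ℕ} (p : ℝ) {z : EuclideanSpace ℝ (Fin n)} (hz : z ≠ 0) :
    0 < lpNorm p z := by
  obtain ⟨i, hi⟩ : ∃ i, z i ≠ 0 := by
    by_contra! h
    exact hz (by ext i; simpa using h i)
  refine Real.rpow_pos_of_pos (sum_pos' (fun _ _ => Real.rpow_nonneg (abs_nonneg _) _)
    ⟨i, mem_univ i, Real.rpow_pos_of_pos (abs_pos.2 hi) _⟩) _

lemma convex_lpBall {n : ℕ} {p r : ℝ} (hp : 1 ≤ p) (hr : 0 < r) (c : EuclideanSpace ℝ (Fin n)) :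
    Convex ℝ {y | lpNorm p (y - c) ≤ r} := by
  have hp0 : 0 < p := by linarith
  intro y hy z hz s t hs ht hst
  simp only [Set.mem_ofPred_eq, lpNorm_le_iff hp0 hr] at hy hz ⊢
  calc ∑ i, |(s • y + t • z - c) i / r| ^ p
      ≤ ∑ i, (s * |(y - c) i / r| ^ p + t * |(z - c) i / r| ^ p) := by
        refine sum_le_sum fun i _ => ?_
        have e : (s • y + t • z - c) i / r = s * ((y - c) i / r) + t * ((z - c) i / r) := by
          obtain rfl : t = 1 - s := by linarith
          simp only [PiLp.sub_apply, PiLp.add_apply, PiLp.smul_apply, smul_eq_mul]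
          ring
        have habs : |(s • y + t • z - c) i / r|
            ≤ s * |(y - c) i / r| + t * |(z - c) i / r| := by
          rw [e]
          refine (abs_add_le _ _).trans_eq ?_
          rw [abs_mul, abs_mul, abs_of_nonneg hs, abs_of_nonneg ht]
        refine (Real.rpow_le_rpow (abs_nonneg _) habs hp0.le).trans ?_
        exact (convexOn_rpow hp).2 (Set.mem_Ici.2 (abs_nonneg _)) (Set.mem_Ici.2 (abs_nonneg _)) hs ht hst
    _ ≤ 1 := by
        rw [sum_add_distrib, ← mul_sum, ← mul_sum]
        nlinarith

lemma hasDerivAt_line {n : ℕ} {f : EuclideanSpace ℝ (Fin n) → ℝ} {v x : EuclideanSpace ℝ (Fin n)}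
    (hf : HasGradientAt f v x) (y : EuclideanSpace ℝ (Fin n)) :
    HasDerivAt (fun t : ℝ => f (AffineMap.lineMap x y t)) (inner ℝ v (y - x)) 0 := by
  have h1 : HasDerivAt (fun t : ℝ => AffineMap.lineMap x y t) (y - x) 0 :=
    AffineMap.hasDerivAt_lineMap
  have h2 : HasFDerivAt f (InnerProductSpace.toDual ℝ _ v) (AffineMap.lineMap x y (0 : ℝ)) := by
    simpa using hf.hasFDerivAt
  simpa using! h2.comp_hasDerivAt (0 : ℝ) h1

/-- First-order optimality condition on a convex set. -/
lemma variational_inequality {n : ℕ} {f : EuclideanSpace ℝ (Fin n) → ℝ}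
    {v x y : EuclideanSpace ℝ (Fin n)} {s : Set (EuclideanSpace ℝ (Fin n))} (hs : Convex ℝ s)
    (hf : HasGradientAt f v x) (hx : x ∈ s) (hy : y ∈ s) (hmin : ∀ z ∈ s, f x ≤ f z) :
    0 ≤ inner ℝ v (y - x) := by
  have h := (show IsMinOn f s x from hmin).localize.hasFDerivWithinAt_nonneg
    hf.hasFDerivAt.hasFDerivWithinAt
    (sub_mem_posTangentConeAt_of_segment_subset (hs.segment_subset hx hy))
  simpa using h

lemma isMin_of_gradient_zero {n : ℕ} {f : EuclideanSpace ℝ (Fin n) → ℝ}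
    {x : EuclideanSpace ℝ (Fin n)} (hf : HasGradientAt f 0 x) (hc : ConvexOn ℝ Set.univ f)
    (y : EuclideanSpace ℝ (Fin n)) : f x ≤ f y := by
  have hd := hasDerivAt_line hf y
  have hc' := hc.comp_affineMap (AffineMap.lineMap x y : ℝ →ᵃ[ℝ] EuclideanSpace ℝ (Fin n))
  have := hc'.le_slope_of_hasDerivAt (Set.mem_univ (0 : ℝ)) (Set.mem_univ (1 : ℝ)) one_pos hd
  simpa [slope_def_field] using this

theorem stmt4 {n : ℕ} (p : ℝ) (hp : 2 ≤ p)
    (f : EuclideanSpace ℝ (Fin n) → ℝ)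
    (g : EuclideanSpace ℝ (Fin n) → EuclideanSpace ℝ (Fin n))
    -- f is continuously differentiable with gradient g
    (hgrad : ∀ w, HasGradientAt f (g w) w) (hgcont : Continuous g)
    -- f is strictly convex
    (hconv : StrictConvexOn ℝ Set.univ f)
    (c x : EuclideanSpace ℝ (Fin n)) (r : ℝ) (hr : 0 < r)
    -- x is a minimizer of f over the closed ℓ_p ball of radius r around c
    (hxball : lpNorm p (x - c) ≤ r)
    (hxmin : ∀ y, lpNorm p (y - c) ≤ r → f x ≤ f y) :
    (g x = 0 ∧ ∀ y, f x ≤ f y) ∨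
      (lpNorm p (x - c) = r ∧
        ∀ i, g x i = -(lpNorm (p / (p - 1)) (g x) / r ^ (p - 1))
            * |x i - c i| ^ (p - 2) * (x i - c i)) := by
  rcases eq_or_ne (g x) 0 with h0 | h0
  · exact Or.inl ⟨h0, isMin_of_gradient_zero (h0 ▸ hgrad x) hconv.convexOn⟩
  right
  have hp0 : 0 < p := by linarith
  obtain ⟨q, hq⟩ : ∃ q, q = p / (p - 1) := ⟨_, rfl⟩
  have hpq : p.HolderConjugate q :=
    (Real.holderConjugate_iff_eq_conjExponent (by linarith)).2 hq
  rw [← hq]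
  have hq0 : 0 < q := hpq.symm.pos
  set N := lpNorm q (g x) with hN
  have hNpos : 0 < N := lpNorm_pos q h0
  set b : Fin n → ℝ := fun i => -g x i / N with hb
  have hbsum : ∑ i, |b i| ^ q = 1 := by
    have : ∀ i, |b i| ^ q = |g x i| ^ q / N ^ q := fun i => by
      rw [hb]
      simp only
      rw [abs_div, abs_neg, abs_of_pos hNpos, Real.div_rpow (abs_nonneg _) hNpos.le]
    simp_rw [this]
    rw [← sum_div, hN, lpNorm_rpow hq0, div_self]
    rw [← lpNorm_rpow hq0]
    exact (Real.rpow_pos_of_pos hNpos q).ne'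
  -- The Hölder-dual point of the ball, at which `⟪g x, ·⟫` is smallest.
  let y : EuclideanSpace ℝ (Fin n) :=
    WithLp.toLp 2 fun i => c i + r * (|b i| ^ (q - 2) * b i)
  have hyi : ∀ i, (y - c) i / r = |b i| ^ (q - 2) * b i := fun i => by
    simp only [y, PiLp.sub_apply]
    field_simp
    ring
  have hyball : lpNorm p (y - c) ≤ r := by
    rw [lpNorm_le_iff hp0 hr]
    simp_rw [hyi, abs_dual_rpow hpq]
    exact hbsum.le
  have hvi := variational_inequality (convex_lpBall (by linarith) hr c) (hgrad x) hxball hyball hxmin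
  have hab : 1 ≤ ∑ i, (x - c) i / r * b i := by
    have e : inner ℝ (g x) (y - x)
        = N * r * (∑ i, (x - c) i / r * b i - ∑ i, |b i| ^ q) := by
      rw [← sum_sub_distrib, mul_sum, PiLp.inner_apply]
      refine sum_congr rfl fun i _ => ?_
      rw [← dual_mul_self hq0.ne', ← hyi]
      simp only [hb, PiLp.sub_apply, RCLike.inner_apply, conj_trivial]
      field_simp
      ring
    rw [e, hbsum] at hvi
    have := nonneg_of_mul_nonneg_right hvi (by positivity : 0 < N * r)
    linarith
  obtain ⟨h1, h2⟩ := eq_of_holder_eq hpq ((lpNorm_le_iff hp0 hr _).1 hxball) hbsum hab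
  refine ⟨lpNorm_eq_of_sum hp0 hr _ h1, fun i => ?_⟩
  have h3 := h2 i
  have hrp : r ^ (p - 1) = r ^ (p - 2) * r := by
    rw [← Real.rpow_add_one hr.ne']; congr 1; ring
  have hr2 : 0 < r ^ (p - 2) := by positivity
  rw [abs_div, abs_of_pos hr, Real.div_rpow (abs_nonneg _) hr.le] at h3
  simp only [hb, PiLp.sub_apply] at h3
  rw [hrp]
  field_simp at h3 ⊢
  linarith
end

section
/- Let 2 ≤ p < s be reals and λ > 0. Let f : ℝ^n → ℝ be convex and differentiable with a global minimizer x*. Let x_t, x'_{t+1}, x_{t+1}, y_t, z_t, z_{t+1} ∈ ℝ^n and reals A_t ≥ 0, a_{t+1} > 0, λ̄_{t+1} > 0 satisfy: (i) A'_{t+1} = A_t + a_{t+1} and λ̄_{t+1} (3p a_{t+1})^p = (A'_{t+1})^{p−1}; (ii) A'_{t+1} y_t = A_t x_t + a_{t+1} z_t; (iii) x'_{t+1} ≠ y_t and λ_{t+1} = λ ‖x'_{t+1} − y_t‖_p^{s−p}; (iv) for every coordinate i, (∇f(x'_{t+1}))_i = −λ_{t+1} p |(x'_{t+1})_i − (y_t)_i|^{p−2}((x'_{t+1})_i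 − (y_t)_i); (v) β_{t+1} = min{1, λ̄_{t+1}/λ_{t+1}}; (vi) for every coordinate i, a_{t+1} β_{t+1} (∇f(x'_{t+1}))_i = p|(z_t)_i|^{p−2}(z_t)_i − p|(z_{t+1})_i|^{p−2}(z_{t+1})_i; (vii) A_{t+1} = A_t + β_{t+1} a_{t+1} and A_{t+1} x_{t+1} = (1 − β_{t+1}) A_t x_t + β_{t+1} A'_{t+1} x'_{t+1}. Write Φ_t = A_t (f(x_t) − f(x*)) + ω_p(x*, z_t). Then exactly one of the following holds. Case 1 (λ_{t+1} ≤ λ̄_{t+1}): Φ_{t+1} ≤ Φ_t, A_{t+1} = A'_{t+1}, and A_{t+1}^{1/p} ≥ A_t^{1/p} + 1/((3p)^{p+1} λ̄_{t+1}^{1/p}). Case 2 (λ_{t+1} > λ̄_{t+1}): Φ_{t+1} ≤ Φ_t − (3p)^{−p/(p−1)} λ^{−p/(s−p)} A'_{t+1} λ̄_{t+1}^{s/(s−p)}, and A_{t+1} ≥ A_t. -/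
/-!
The heart of the matter is that, for `p ≥ 2`, the function `t ↦ |t| ^ p` is uniformly convex: its
scalar Bregman divergence dominates `2 ^ (1 - p) * |x - y| ^ p` (`bregman_lower`). This follows from
Clarkson's inequality (`clarkson`) together with the tangent line at `y` evaluated at the midpoint.

Write `δ = x'_{t+1} - y_t`, `D = ∑ |δ_i| ^ p`, `m = β λ_{t+1} ≤ λ̄` (drop the time indices, and let
`A' = A_t + a`). Jensen's inequality for the average `x_{t+1}` of `x_t` and `x'`, the subgradient
inequality at `x'` tested against `x_t` and `x*` (`gradient_ineq`), the definition of `y_t`, and the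
three-point identity for Bregman divergences give
`Φ_{t+1} - Φ_t ≤ β A' ⟨∇f(x'), δ⟩ + a β ⟨∇f(x'), z_t - z_{t+1}⟩ - ω(z_{t+1}, z_t)`.
By the optimality condition of the proximal step the first term is `-p m A' D`. A rescaled Young
inequality at scale `τ = A' / (2a)`, the uniform convexity bound, and the equation defining `λ̄` bound
the other two terms by half of that (`step_coord`). Hence `Φ_{t+1} ≤ Φ_t - (p/2) m A' D`.

In Case 1 this is a decrease, and the growth of `A ^ (1/p)` is Bernoulli's inequality
(`growth_bound`). In Case 2, `m = λ̄` and `D = (λ_{t+1}/λ) ^ (p/(s-p)) ≥ (λ̄/λ) ^ (p/(s-p))`, which is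
the quantitative decrease, since `p/2 ≥ 1 ≥ (3p) ^ (-p/(p-1))`.
-/

open Finset

/-- Bregman divergence of ‖·‖_p^p. -/
noncomputable def omegaP {n : ℕ} (p : ℝ) (x y : EuclideanSpace ℝ (Fin n)) : ℝ :=
  (∑ i, |x i| ^ p) - (∑ i, |y i| ^ p) - ∑ i, p * |y i| ^ (p - 2) * y i * (x i - y i)

/-! ### Scalar inequalities for `|t| ^ p` -/

lemma abs_rpow_mul_self {p : ℝ} (hp : 2 ≤ p) (y : ℝ) : |y| ^ (p - 2) * y * y = |y| ^ p := by
  rcases eq_or_ne y 0 with rfl | hy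
  · simp [Real.zero_rpow (by linarith : p ≠ 0)]
  · have h : 0 < |y| := abs_pos.mpr hy
    rw [mul_assoc, ← abs_mul_abs_self y, ← pow_two, ← Real.rpow_natCast, ← Real.rpow_add h]
    norm_num

/-- Young's inequality, as the tangent-line inequality
`|w| ^ p ≥ |y| ^ p + p |y| ^ (p - 2) y (w - y)` with the terms in `y` alone collected. -/
lemma tangent_young {p : ℝ} (hp : 2 ≤ p) (y w : ℝ) :
    p * |y| ^ (p - 2) * y * w ≤ |w| ^ p + (p - 1) * |y| ^ p := by
  have hp0 : 0 < p := by linarith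
  have hq : p.HolderConjugate (p / (p - 1)) := Real.HolderConjugate.conjExponent (by linarith)
  have h := Real.young_inequality w (|y| ^ (p - 2) * y) hq
  have h1 : |(|y| ^ (p - 2) * y)| ^ (p / (p - 1)) = |y| ^ p := by
    rw [abs_mul, abs_of_nonneg (Real.rpow_nonneg (abs_nonneg y) _)]
    rcases eq_or_ne y 0 with rfl | hy
    · rw [abs_zero, mul_zero, Real.zero_rpow hp0.ne', Real.zero_rpow]
      exact (div_pos hp0 (by linarith)).ne'
    · have h : 0 < |y| := abs_pos.mpr hy
      nth_rewrite 2 [← Real.rpow_one |y|]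
      rw [← Real.rpow_add h, ← Real.rpow_mul h.le]
      congr 1
      have : p - 1 ≠ 0 := by linarith
      field_simp
      ring
  rw [h1] at h
  have h2 := mul_le_mul_of_nonneg_left h hp0.le
  have h3 : p * (|w| ^ p / p + |y| ^ p / (p / (p - 1))) = |w| ^ p + (p - 1) * |y| ^ p := by
    have : p - 1 ≠ 0 := by linarith
    field_simp
  rw [h3] at h2
  linarith

/-- Young's inequality at an arbitrary scale `τ`. -/
lemma tangent_young_scaled {p τ : ℝ} (hp : 2 ≤ p) (hτ : 0 < τ) (y v : ℝ) :
    p * |y| ^ (p - 2) * y * v ≤ τ ^ (1 - p) * |v| ^ p + τ * (p - 1) * |y| ^ p := by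
  have h := mul_le_mul_of_nonneg_left (tangent_young hp y (v / τ)) hτ.le
  have h1 : τ * (p * |y| ^ (p - 2) * y * (v / τ)) = p * |y| ^ (p - 2) * y * v := by
    field_simp
  have h2 : τ * |v / τ| ^ p = τ ^ (1 - p) * |v| ^ p := by
    rw [abs_div, abs_of_pos hτ, Real.div_rpow (abs_nonneg v) hτ.le, Real.rpow_sub hτ,
      Real.rpow_one]
    ring
  rw [h1, mul_add, h2] at h
  linarith

/-- Scalar Clarkson inequality, from superadditivity and convexity of `t ↦ t ^ (p / 2)` applied to
the squares in the parallelogram law. -/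
lemma clarkson {p : ℝ} (hp : 2 ≤ p) (x y : ℝ) :
    |(x + y) / 2| ^ p + |(x - y) / 2| ^ p ≤ (|x| ^ p + |y| ^ p) / 2 := by
  have hr : 1 ≤ p / 2 := by linarith
  have key : ∀ t : ℝ, |t| ^ p = (t ^ 2) ^ (p / 2) := by
    intro t
    rw [← sq_abs, ← Real.rpow_natCast, ← Real.rpow_mul (abs_nonneg t)]
    congr 1
    push_cast
    ring
  simp only [key]
  have h1 := NNReal.add_rpow_le_rpow_add (⟨((x + y) / 2) ^ 2, sq_nonneg _⟩ : NNReal)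
    ⟨((x - y) / 2) ^ 2, sq_nonneg _⟩ hr
  have h2 := NNReal.rpow_arith_mean_le_arith_mean2_rpow (1 / 2) (1 / 2)
    (⟨x ^ 2, sq_nonneg _⟩ : NNReal) ⟨y ^ 2, sq_nonneg _⟩ (by norm_num) hr
  rw [← NNReal.coe_le_coe] at h1 h2
  push_cast at h1 h2
  have h3 : ((x + y) / 2) ^ 2 + ((x - y) / 2) ^ 2 = 1 / 2 * x ^ 2 + 1 / 2 * y ^ 2 := by ring
  change (((x + y) / 2) ^ 2) ^ (p / 2) + (((x - y) / 2) ^ 2) ^ (p / 2)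
    ≤ (((x + y) / 2) ^ 2 + ((x - y) / 2) ^ 2) ^ (p / 2) at h1
  change (1 / 2 * x ^ 2 + 1 / 2 * y ^ 2) ^ (p / 2)
    ≤ 1 / 2 * (x ^ 2) ^ (p / 2) + 1 / 2 * (y ^ 2) ^ (p / 2) at h2
  rw [h3] at h1
  linarith

/-- Uniform convexity of `|t| ^ p`: a lower bound on its Bregman divergence. -/
lemma bregman_lower {p : ℝ} (hp : 2 ≤ p) (x y : ℝ) :
    (2 : ℝ) ^ (1 - p) * |x - y| ^ p ≤
      |x| ^ p - |y| ^ p - p * |y| ^ (p - 2) * y * (x - y) := by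
  have h1 := clarkson hp x y
  have h2 := tangent_young hp y ((x + y) / 2)
  have h3 := abs_rpow_mul_self hp y
  have h4 : (2 : ℝ) ^ (1 - p) * |x - y| ^ p = 2 * |(x - y) / 2| ^ p := by
    rw [abs_div, Real.div_rpow (abs_nonneg _) (abs_nonneg _), abs_two, Real.rpow_sub two_pos,
      Real.rpow_one]
    ring
  rw [h4]
  linear_combination 2 * h1 + 2 * h2 - 2 * p * h3

/-! ### Estimates for one step of the scheme -/

/-- The coupling of the step size `a` to `λ̄` makes the Young term at scale `A' / (2a)` no larger
than the uniform convexity term. -/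
lemma scale_bound {p a A' lbar : ℝ} (hp : 2 ≤ p) (ha : 0 < a) (hA' : 0 < A')
    (h : lbar * (3 * p * a) ^ p = A' ^ (p - 1)) :
    a * lbar * (A' / (2 * a)) ^ (1 - p) ≤ (2 : ℝ) ^ (1 - p) := by
  have hlb : 0 < lbar := by
    have h1 : 0 < A' ^ (p - 1) := Real.rpow_pos_of_pos hA' _
    rw [← h] at h1
    exact pos_of_mul_pos_left h1 (by positivity)
  have e1 : (A' / (2 * a)) ^ (1 - p) = (2 * a) ^ (p - 1) / A' ^ (p - 1) := by
    rw [show 1 - p = -(p - 1) by ring, Real.rpow_neg (by positivity),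
      Real.div_rpow hA'.le (by positivity), inv_div]
  have e2 : (2 : ℝ) ^ (1 - p) = 1 / 2 ^ (p - 1) := by
    rw [show 1 - p = -(p - 1) by ring, Real.rpow_neg (by positivity), one_div]
  rw [e1, e2, ← h, mul_div_assoc', div_le_div_iff₀ (by positivity) (by positivity)]
  have e3 : (3 * p * a) ^ p = (3 * p) ^ p * (a * a ^ (p - 1)) := by
    rw [Real.mul_rpow (by positivity) ha.le]
    congr 1
    nth_rewrite 2 [← Real.rpow_one a]
    rw [← Real.rpow_add ha]
    congr 1
    ring
  have e4 : (2 * a) ^ (p - 1) * 2 ^ (p - 1) = (4 : ℝ) ^ (p - 1) * a ^ (p - 1) := by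
    rw [Real.mul_rpow (by norm_num) ha.le, show (4 : ℝ) = 2 * 2 by norm_num,
      Real.mul_rpow (by norm_num) (by norm_num)]
    ring
  have e5 : (4 : ℝ) ^ (p - 1) ≤ (3 * p) ^ p :=
    calc (4 : ℝ) ^ (p - 1) ≤ 4 ^ p :=
          Real.rpow_le_rpow_of_exponent_le (by norm_num) (by linarith)
      _ ≤ (3 * p) ^ p := Real.rpow_le_rpow (by norm_num) (by linarith) (by linarith)
  rw [mul_assoc, e4, e3]
  have : 0 ≤ lbar * (a * a ^ (p - 1)) := by positivity
  nlinarith [mul_le_mul_of_nonneg_left e5 this]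

/-- In one coordinate, the mirror-descent regret is absorbed by the divergence term and half of
the progress of the proximal step. -/
lemma step_coord {p a A' lbar m : ℝ} (hp : 2 ≤ p) (ha : 0 < a) (hA' : 0 < A')
    (h : lbar * (3 * p * a) ^ p = A' ^ (p - 1)) (hm0 : 0 ≤ m) (hm : m ≤ lbar) (d z w : ℝ) :
    a * m * (p * |d| ^ (p - 2) * d * (w - z)) ≤
      (|w| ^ p - |z| ^ p - p * |z| ^ (p - 2) * z * (w - z)) + p / 2 * m * A' * |d| ^ p := by
  have hτ : 0 < A' / (2 * a) := by positivity
  have h1 := mul_le_mul_of_nonneg_left (tangent_young_scaled hp hτ d (w - z))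
    (mul_nonneg ha.le hm0)
  have h2 := bregman_lower hp w z
  have h3 : a * m * (A' / (2 * a)) ^ (1 - p) ≤ (2 : ℝ) ^ (1 - p) := by
    refine le_trans ?_ (scale_bound hp ha hA' h)
    gcongr
  have h4 := mul_le_mul_of_nonneg_right h3 (Real.rpow_nonneg (abs_nonneg (w - z)) p)
  have h5 : a * m * (A' / (2 * a) * (p - 1) * |d| ^ p) = (p - 1) / 2 * m * A' * |d| ^ p := by
    field_simp
  have h6 : 0 ≤ 1 / 2 * (m * A' * |d| ^ p) := by positivity
  linarith

lemma growth_bound {p A a A' lbar : ℝ} (hp : 2 ≤ p) (hA : 0 ≤ A) (ha : 0 < a) (hlb : 0 < lbar)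
    (hA' : A' = A + a) (h : lbar * (3 * p * a) ^ p = A' ^ (p - 1)) :
    A ^ (1 / p) + 1 / ((3 * p) ^ (p + 1) * lbar ^ (1 / p)) ≤ A' ^ (1 / p) := by
  have hp0 : 0 < p := by linarith
  have hA'0 : 0 < A' := by linarith
  have hb := rpow_one_add_le_one_add_mul_self (s := -(a / A')) (p := 1 / p)
    (by rw [neg_le_neg_iff, div_le_one hA'0]; linarith) (by positivity)
    (by rw [div_le_one hp0]; linarith)
  have e1 : 1 + -(a / A') = A / A' := by rw [hA'] at hA'0 ⊢; field_simp; ring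
  rw [e1, Real.div_rpow hA hA'0.le] at hb
  have hP : 0 < A' ^ (1 / p) := Real.rpow_pos_of_pos hA'0 _
  rw [div_le_iff₀ hP] at hb
  have e2 : lbar ^ (1 / p) * (3 * p * a) = A' / A' ^ (1 / p) := by
    have := congrArg (fun t : ℝ => t ^ (1 / p)) h
    beta_reduce at this
    rw [Real.mul_rpow hlb.le (by positivity), ← Real.rpow_mul (by positivity),
      mul_one_div_cancel hp0.ne', Real.rpow_one, ← Real.rpow_mul hA'0.le] at this
    rw [this, show (p - 1) * (1 / p) = 1 - 1 / p by field_simp, Real.rpow_sub hA'0, Real.rpow_one]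
  have hL : 0 < lbar ^ (1 / p) := Real.rpow_pos_of_pos hlb _
  have e3 : 1 / ((3 * p) ^ (p + 1) * lbar ^ (1 / p)) = (a / A') * A' ^ (1 / p) / (3 * p) ^ p := by
    rw [Real.rpow_add (by positivity), Real.rpow_one]
    have hX : 0 < (3 * p) ^ p := by positivity
    rw [div_eq_div_iff (by positivity) hX.ne']
    have : lbar ^ (1 / p) = A' / A' ^ (1 / p) / (3 * p * a) := by
      rw [← e2]; field_simp
    rw [this]
    field_simp
  have e4 : p ≤ (3 * p) ^ p :=
    calc p ≤ 3 * p := by linarith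
      _ = (3 * p) ^ (1 : ℝ) := (Real.rpow_one _).symm
      _ ≤ (3 * p) ^ p := Real.rpow_le_rpow_of_exponent_le (by linarith) (by linarith)
  have e5 : (a / A') * A' ^ (1 / p) / (3 * p) ^ p ≤ (a / A') * A' ^ (1 / p) / p := by gcongr
  rw [e3]
  have e6 : (1 + 1 / p * -(a / A')) * A' ^ (1 / p) = A' ^ (1 / p) - (a / A') * A' ^ (1 / p) / p := by
    ring
  linarith

/-- Subgradient inequality: the graph of a convex function lies above its tangent hyperplanes. -/
lemma gradient_ineq {n : ℕ} {f : EuclideanSpace ℝ (Fin n) → ℝ} (hconv : ConvexOn ℝ Set.univ f)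
    {x G : EuclideanSpace ℝ (Fin n)} (hG : HasGradientAt f G x) (v : EuclideanSpace ℝ (Fin n)) :
    f x + ∑ i, G i * (v i - x i) ≤ f v := by
  have hline : ConvexOn ℝ Set.univ (fun t : ℝ => f (AffineMap.lineMap x v t)) := by
    simpa [Function.comp_def] using hconv.comp_affineMap (AffineMap.lineMap x v : ℝ →ᵃ[ℝ] _)
  have hd : HasDerivAt (fun t : ℝ => f (AffineMap.lineMap x v t)) (inner ℝ G (v - x)) 0 := by
    have h1 : HasFDerivAt f (InnerProductSpace.toDual ℝ _ G) (AffineMap.lineMap x v (0 : ℝ)) := by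
      simpa using hasGradientAt_iff_hasFDerivAt.mp hG
    have h2 := h1.comp_hasDerivAt (0 : ℝ) (AffineMap.hasDerivAt_lineMap (a := x) (b := v) (x := 0))
    simpa [Function.comp_def] using h2
  have h := hline.le_slope_of_hasDerivAt (Set.mem_univ 0) (Set.mem_univ 1) one_pos hd
  have hin : inner ℝ G (v - x) = ∑ i, G i * (v i - x i) := by
    simp [PiLp.inner_apply, mul_comm]
  rw [hin] at h
  simp [slope_def_field] at h
  linarith

/-! ### Decrease of the potential -/

theorem stmt9 {n : ℕ} (p s lam : ℝ) (hp : 2 ≤ p) (hps : p < s) (hlam : 0 < lam)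
    (f : EuclideanSpace ℝ (Fin n) → ℝ)
    (g : EuclideanSpace ℝ (Fin n) → EuclideanSpace ℝ (Fin n))
    (hconv : ConvexOn ℝ Set.univ f)
    (hgrad : ∀ w, HasGradientAt f (g w) w)
    (xstar : EuclideanSpace ℝ (Fin n)) (hmin : ∀ y, f xstar ≤ f y)
    (xt xt1' xt1 yt zt zt1 : EuclideanSpace ℝ (Fin n))
    (At At1' At1 a1 lbar lam1 β1 : ℝ)
    (hAt : 0 ≤ At) (ha1 : 0 < a1) (hlbar : 0 < lbar)
    -- (i)
    (hA1' : At1' = At + a1)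
    (hlbardef : lbar * (3 * p * a1) ^ p = At1' ^ (p - 1))
    -- (ii)
    (hy : At1' • yt = At • xt + a1 • zt)
    -- (iii)
    (hne : xt1' ≠ yt)
    (hlam1 : lam1 = lam * (lpNorm p (xt1' - yt)) ^ (s - p))
    -- (iv)
    (hopt : ∀ i, g xt1' i
      = -(lam1 * p * |xt1' i - yt i| ^ (p - 2) * (xt1' i - yt i)))
    -- (v)
    (hβ : β1 = min 1 (lbar / lam1))
    -- (vi)
    (hz : ∀ i, a1 * β1 * g xt1' i
      = p * |zt i| ^ (p - 2) * zt i - p * |zt1 i| ^ (p - 2) * zt1 i)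
    -- (vii)
    (hA1 : At1 = At + β1 * a1)
    (hx1 : At1 • xt1 = (1 - β1) • (At • xt) + β1 • (At1' • xt1')) :
    -- Case 1
    (lam1 ≤ lbar →
      (At1 * (f xt1 - f xstar) + omegaP p xstar zt1
          ≤ At * (f xt - f xstar) + omegaP p xstar zt) ∧
        At1 = At1' ∧
        At ^ (1 / p) + 1 / ((3 * p) ^ (p + 1) * lbar ^ (1 / p)) ≤ At1 ^ (1 / p)) ∧
    -- Case 2
    (lbar < lam1 →
      (At1 * (f xt1 - f xstar) + omegaP p xstar zt1
          ≤ At * (f xt - f xstar) + omegaP p xstar zt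
            - (3 * p) ^ (-(p / (p - 1))) * lam ^ (-(p / (s - p))) * At1'
              * lbar ^ (s / (s - p))) ∧
        At ≤ At1) := by
  have hp0 : 0 < p := by linarith
  have hsp : 0 < s - p := by linarith
  have hA'0 : 0 < At1' := by linarith
  set D : ℝ := ∑ i, |xt1' i - yt i| ^ p with hD
  have hD0 : 0 < D := by
    have hex : ∃ i, xt1' i ≠ yt i := by
      by_contra! hc
      exact hne (PiLp.ext hc)
    obtain ⟨i, hi⟩ := hex
    exact Finset.sum_pos' (fun j _ => by positivity)
      ⟨i, Finset.mem_univ i, Real.rpow_pos_of_pos (abs_pos.mpr (sub_ne_zero.mpr hi)) _⟩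
  have hlamD : lam1 = lam * D ^ ((s - p) / p) := by
    rw [hlam1, lpNorm]
    simp only [PiLp.sub_apply]
    rw [← hD, ← Real.rpow_mul hD0.le, one_div_mul_eq_div]
  have hlam1pos : 0 < lam1 := by rw [hlamD]; positivity
  have hβ0 : 0 < β1 := by rw [hβ]; exact lt_min one_pos (by positivity)
  have hβ1 : β1 ≤ 1 := by rw [hβ]; exact min_le_left _ _
  have hm : β1 * lam1 ≤ lbar := by
    calc β1 * lam1 ≤ lbar / lam1 * lam1 := by rw [hβ]; gcongr; exact min_le_right _ _
      _ = lbar := by field_simp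
  have hA1pos : 0 < At1 := by rw [hA1]; positivity
  have hm0 : 0 < β1 * lam1 := by positivity
  have hmain : At1 * (f xt1 - f xstar) + omegaP p xstar zt1
      ≤ At * (f xt - f xstar) + omegaP p xstar zt - p / 2 * (β1 * lam1) * At1' * D := by
    have hcx : At1 * f xt1 ≤ (1 - β1) * At * f xt + β1 * At1' * f xt1' := by
      have hx : xt1 = ((1 - β1) * At / At1) • xt + (β1 * At1' / At1) • xt1' := by
        have h1 : xt1 = At1⁻¹ • (At1 • xt1) := (inv_smul_smul₀ hA1pos.ne' _).symm
        rw [hx1] at h1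
        rw [h1, smul_add, smul_smul, smul_smul, smul_smul, smul_smul]
        congr 2 <;> ring
      have h2 := hconv.2 (Set.mem_univ xt) (Set.mem_univ xt1')
        (show 0 ≤ (1 - β1) * At / At1 from
          div_nonneg (mul_nonneg (by linarith) hAt) hA1pos.le)
        (show 0 ≤ β1 * At1' / At1 by positivity)
        (by rw [← add_div, div_eq_one_iff_eq hA1pos.ne', hA1, hA1']; ring)
      rw [← hx, smul_eq_mul, smul_eq_mul] at h2
      have h3 := mul_le_mul_of_nonneg_left h2 hA1pos.le
      refine h3.trans (le_of_eq ?_)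
      field_simp
    have hg1 := gradient_ineq hconv (hgrad xt1') xt
    have hg2 := gradient_ineq hconv (hgrad xt1') xstar
    have hg1' := mul_le_mul_of_nonneg_left hg1 (mul_nonneg hβ0.le hAt)
    have hg2' := mul_le_mul_of_nonneg_left hg2 (mul_nonneg hβ0.le ha1.le)
    -- The three-point identity and the coordinate estimate, summed over the coordinates.
    have hsum : ∑ i, ((|xstar i| ^ p - |zt1 i| ^ p - p * |zt1 i| ^ (p - 2) * zt1 i * (xstar i - zt1 i))
          - (β1 * At * (g xt1' i * (xt i - xt1' i)) + β1 * a1 * (g xt1' i * (xstar i - xt1' i))))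
        ≤ ∑ i, ((|xstar i| ^ p - |zt i| ^ p - p * |zt i| ^ (p - 2) * zt i * (xstar i - zt i))
          - p / 2 * (β1 * lam1) * At1' * |xt1' i - yt i| ^ p) := by
      refine Finset.sum_le_sum fun i _ => ?_
      have hyi : At1' * yt i = At * xt i + a1 * zt i := by
        simpa using congrArg (fun v : EuclideanSpace ℝ (Fin n) => v i) hy
      have hs := step_coord hp ha1 hA'0 hlbardef hm0.le hm (xt1' i - yt i) (zt i) (zt1 i)
      have hself := abs_rpow_mul_self hp (xt1' i - yt i)
      have hzi := hz i
      rw [hopt i] at hzi ⊢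
      linear_combination hs - (xstar i - zt1 i) * hzi
        - β1 * (lam1 * p * |xt1' i - yt i| ^ (p - 2) * (xt1' i - yt i)) * hyi
        + β1 * (lam1 * p * |xt1' i - yt i| ^ (p - 2) * (xt1' i - yt i)) * xt1' i * hA1'
        - β1 * lam1 * p * At1' * hself
    simp only [Finset.sum_sub_distrib, Finset.sum_add_distrib, ← Finset.mul_sum] at hsum
    simp only [omegaP]
    linear_combination hcx + hg1' + hg2' + hsum - f xstar * hA1 + β1 * f xt1' * hA1'
  refine ⟨fun hle => ?_, fun hlt => ⟨?_, ?_⟩⟩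
  · have hβe : β1 = 1 := by rw [hβ, min_eq_left ((one_le_div hlam1pos).mpr hle)]
    have hAe : At1 = At1' := by rw [hA1, hA1', hβe, one_mul]
    refine ⟨?_, hAe, ?_⟩
    · have : 0 ≤ p / 2 * (β1 * lam1) * At1' * D := by positivity
      linarith
    · rw [hAe]
      exact growth_bound hp hAt ha1 hlbar hA1' hlbardef
  · have hβe : β1 * lam1 = lbar := by
      rw [hβ, min_eq_right ((div_le_one hlam1pos).mpr hlt.le)]
      field_simp
    have hDe : (lam1 / lam) ^ (p / (s - p)) = D := by
      rw [hlamD, mul_div_cancel_left₀ _ hlam.ne', ← Real.rpow_mul hD0.le]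
      have : (s - p) / p * (p / (s - p)) = 1 := by field_simp
      rw [this, Real.rpow_one]
    have hDlb : (lbar / lam) ^ (p / (s - p)) ≤ D := by
      rw [← hDe]
      gcongr
    have hexp : lam ^ (-(p / (s - p))) * lbar ^ (s / (s - p))
        = lbar * (lbar / lam) ^ (p / (s - p)) := by
      rw [Real.rpow_neg hlam.le, Real.div_rpow hlbar.le hlam.le,
        show s / (s - p) = 1 + p / (s - p) by field_simp; ring, Real.rpow_add hlbar, Real.rpow_one]
      ring
    have hc : (3 * p) ^ (-(p / (p - 1))) ≤ 1 :=
      Real.rpow_le_one_of_one_le_of_nonpos (by linarith)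
        (neg_nonpos.mpr (div_nonneg hp0.le (by linarith)))
    have hfin : (3 * p) ^ (-(p / (p - 1))) * lam ^ (-(p / (s - p))) * At1' * lbar ^ (s / (s - p))
        ≤ p / 2 * (β1 * lam1) * At1' * D :=
      calc _ = (3 * p) ^ (-(p / (p - 1))) * (At1' * (lbar * (lbar / lam) ^ (p / (s - p)))) := by
            rw [← hexp]; ring
        _ ≤ p / 2 * (At1' * (lbar * D)) := by
            gcongr
            linarith
        _ = _ := by rw [hβe]; ring
    linarith
  · have : 0 ≤ β1 * a1 := by positivity
    linarith
end
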